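/- For κ ≠ 0, every finite-dimensional U_q(sl*₂,κ)-module is semisimple. -/

import Mathlib

noncomputable section

/-- `q` is not a root of unity (in particular nonzero). -/
def NotRootOfUnity (q : ℂ) : Prop := q ≠ 0 ∧ ∀ n : ℕ, 0 < n → q ^ n ≠ 1

/-- Defining relations of the Hopf PBW-deformation `U_q(sl*₂, κ)`: generators
`0 = K`, `1 = K⁻¹`, `2 = E`, `3 = F`, relations `KK⁻¹ = K⁻¹K = 1`, `KE = q²EK`,
`KF = q⁻²FK`, `EF - FE = a(Kᵐ - K⁻ᵐ)`.  The case `a = 0` is `U_q(sl*₂)` itself. -/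
inductive UqRel (q a : ℂ) (m : ℕ) : FreeAlgebra ℂ (Fin 4) → FreeAlgebra ℂ (Fin 4) → Prop
  | KKinv : UqRel q a m (FreeAlgebra.ι ℂ 0 * FreeAlgebra.ι ℂ 1) 1
  | KinvK : UqRel q a m (FreeAlgebra.ι ℂ 1 * FreeAlgebra.ι ℂ 0) 1
  | KE : UqRel q a m (FreeAlgebra.ι ℂ 0 * FreeAlgebra.ι ℂ 2)
      (q ^ 2 • (FreeAlgebra.ι ℂ 2 * FreeAlgebra.ι ℂ 0))
  | KF : UqRel q a m (FreeAlgebra.ι ℂ 0 * FreeAlgebra.ι ℂ 3)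
      ((q ^ 2)⁻¹ • (FreeAlgebra.ι ℂ 3 * FreeAlgebra.ι ℂ 0))
  | EF : UqRel q a m (FreeAlgebra.ι ℂ 2 * FreeAlgebra.ι ℂ 3)
      (FreeAlgebra.ι ℂ 3 * FreeAlgebra.ι ℂ 2 +
        a • (FreeAlgebra.ι ℂ 0 ^ m - FreeAlgebra.ι ℂ 1 ^ m))

/-- The algebra `U_q(sl*₂, κ)`; `a = 0` gives the new type quantum group `U_q(sl*₂)`. -/
abbrev Uq (q a : ℂ) (m : ℕ) : Type := RingQuot (UqRel q a m)

def genK (q a : ℂ) (m : ℕ) : Uq q a m := RingQuot.mkAlgHom ℂ (UqRel q a m) (FreeAlgebra.ι ℂ 0)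
def genKinv (q a : ℂ) (m : ℕ) : Uq q a m := RingQuot.mkAlgHom ℂ (UqRel q a m) (FreeAlgebra.ι ℂ 1)
def genE (q a : ℂ) (m : ℕ) : Uq q a m := RingQuot.mkAlgHom ℂ (UqRel q a m) (FreeAlgebra.ι ℂ 2)
def genF (q a : ℂ) (m : ℕ) : Uq q a m := RingQuot.mkAlgHom ℂ (UqRel q a m) (FreeAlgebra.ι ℂ 3)

namespace UqAux

open Module Polynomial

variable {V : Type*} [AddCommGroup V] [Module ℂ V]

/-- Operators satisfying the defining relations, with `c = q²`. -/
structure Rep (c a : ℂ) (m : ℕ) (K Ki E F : Module.End ℂ V) : Prop where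
  hm : 0 < m
  ha : a ≠ 0
  hc0 : c ≠ 0
  hc : ∀ n : ℕ, 0 < n → c ^ n ≠ 1
  KKi : ∀ v, K (Ki v) = v
  KiK : ∀ v, Ki (K v) = v
  KE : ∀ v, K (E v) = c • E (K v)
  KF : ∀ v, K (F v) = c⁻¹ • F (K v)
  EF : ∀ v, E (F v) = F (E v) + a • ((K ^ m) v - (Ki ^ m) v)

/-- Subspaces stable under all the operators. -/
structure Stable (K Ki E F : Module.End ℂ V) (N : Submodule ℂ V) : Prop where
  K : ∀ v ∈ N, K v ∈ N
  Ki : ∀ v ∈ N, Ki v ∈ N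
  E : ∀ v ∈ N, E v ∈ N
  F : ∀ v ∈ N, F v ∈ N

theorem pow_inj_of {c : ℂ} (h0 : c ≠ 0) (hc : ∀ n : ℕ, 0 < n → c ^ n ≠ 1) {i j : ℕ}
    (h : c ^ i = c ^ j) : i = j := by
  wlog hij : i ≤ j generalizing i j
  · exact (this h.symm (by omega)).symm
  by_contra hne
  apply hc (j - i) (by omega)
  have : c ^ j = c ^ i * c ^ (j - i) := by rw [← pow_add]; congr 1; omega
  rw [this] at h
  have hi : c ^ i ≠ 0 := pow_ne_zero _ h0
  exact (mul_left_cancel₀ hi (by rw [← h, mul_one])).symm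

theorem pow_mem {T : Module.End ℂ V} {N : Submodule ℂ V} (h : ∀ v ∈ N, T v ∈ N) (n : ℕ) :
    ∀ v ∈ N, (T ^ n) v ∈ N := by
  induction n with
  | zero => intro v hv; simpa using hv
  | succ n ih =>
    intro v hv
    rw [pow_succ, Module.End.mul_apply]
    exact ih _ (h _ hv)

theorem aeval_mem {T : Module.End ℂ V} {N : Submodule ℂ V} (h : ∀ v ∈ N, T v ∈ N) (P : ℂ[X]) :
    ∀ v ∈ N, (aeval T P) v ∈ N := by
  intro v hv
  induction P using Polynomial.induction_on' with
  | add p q hp hq => simpa using N.add_mem hp hq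
  | monomial n a =>
    rw [aeval_monomial, Module.End.mul_apply, Module.algebraMap_end_apply]
    exact N.smul_mem _ (pow_mem h n v hv)

theorem coprime_mem {T : Module.End ℂ V} {N : Submodule ℂ V} (h : ∀ v ∈ N, T v ∈ N)
    {P Q : ℂ[X]} (hPQ : IsCoprime P Q) {v : V} (hP : aeval T P v ∈ N) (hQ : aeval T Q v ∈ N) :
    v ∈ N := by
  obtain ⟨A, B, hAB⟩ := hPQ
  have := congrArg (fun R => aeval T R v) hAB
  simp only [map_add, map_mul, map_one, LinearMap.add_apply, Module.End.mul_apply,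
    Module.End.one_apply] at this
  rw [← this]
  exact N.add_mem (aeval_mem h _ _ hP) (aeval_mem h _ _ hQ)

theorem aeval_lin (T : Module.End ℂ V) (μ : ℂ) (r : ℕ) :
    aeval T ((X - C μ) ^ r) = (T - μ • (1 : Module.End ℂ V)) ^ r := by
  simp [Algebra.algebraMap_eq_smul_one]

theorem coprime_lin {P : ℂ[X]} {μ : ℂ} (h : P.eval μ ≠ 0) (r : ℕ) :
    IsCoprime P ((X - C μ) ^ r) := by
  apply IsCoprime.pow_right
  apply IsCoprime.symm
  rw [(irreducible_X_sub_C μ).coprime_iff_not_dvd, dvd_iff_isRoot]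
  exact h

theorem lemA0 {T : Module.End ℂ V} {N : Submodule ℂ V} (h : ∀ v ∈ N, T v ∈ N)
    {P : ℂ[X]} {μ : ℂ} (hμ : P.eval μ ≠ 0) {v : V} {r : ℕ} (hP : aeval T P v ∈ N)
    (hr : ((T - μ • (1 : Module.End ℂ V)) ^ r) v ∈ N) : v ∈ N := by
  rw [← aeval_lin] at hr
  exact coprime_mem h (coprime_lin hμ r) hP hr

theorem lemA1 {T : Module.End ℂ V} {N : Submodule ℂ V} (h : ∀ v ∈ N, T v ∈ N)
    {P : ℂ[X]} (hs : P.Separable) {μ : ℂ} {v : V} {r : ℕ} (hP : aeval T P v ∈ N)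
    (hr : ((T - μ • (1 : Module.End ℂ V)) ^ r) v ∈ N) : T v - μ • v ∈ N := by
  by_cases hμ : P.eval μ = 0
  · obtain ⟨Q, rfl⟩ := dvd_iff_isRoot.mpr hμ
    have hQ : Q.eval μ ≠ 0 := by
      intro h0
      obtain ⟨R, rfl⟩ := dvd_iff_isRoot.mpr h0
      have := hs.squarefree (X - C μ) ⟨R, by ring⟩
      exact (irreducible_X_sub_C μ).not_isUnit this
    have e : T v - μ • v = aeval T (X - C μ) v := by
      simp [Algebra.algebraMap_eq_smul_one]
    rw [e]
    apply lemA0 h hQ (r := r)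
    · rw [mul_comm, map_mul, Module.End.mul_apply] at hP
      exact hP
    · rw [← aeval_lin, ← Module.End.mul_apply, ← map_mul, mul_comm, map_mul, Module.End.mul_apply,
        aeval_lin]
      exact aeval_mem h _ _ hr
  · have := lemA0 h hμ hP hr
    exact N.sub_mem (h _ this) (N.smul_mem _ this)

/-- The weight polynomial. -/
def wp (b : ℂ) (m n : ℕ) : ℂ[X] := ∏ i ∈ Finset.range n, (X ^ (2 * m) - C (b ^ i))

theorem wp_sep {b : ℂ} (h0 : b ≠ 0) (hb : ∀ n : ℕ, 0 < n → b ^ n ≠ 1) {m : ℕ} (hm : 0 < m)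
    (n : ℕ) : (wp b m n).Separable := by
  apply separable_prod'
  · intro i _ j _ hij
    have hne : b ^ j - b ^ i ≠ 0 := fun h => hij (pow_inj_of h0 hb (sub_eq_zero.mp h)).symm
    refine ⟨C (b ^ j - b ^ i)⁻¹, -C (b ^ j - b ^ i)⁻¹, ?_⟩
    have : C (b ^ j - b ^ i)⁻¹ * C (b ^ j - b ^ i) = 1 := by
      rw [← C_mul, inv_mul_cancel₀ hne, C_1]
    rw [C_sub] at this
    linear_combination this
  · intro i _
    exact separable_X_pow_sub_C _ (by exact_mod_cast (by omega : 2 * m ≠ 0)) (pow_ne_zero _ h0)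

theorem wp_root {b : ℂ} {m n : ℕ} {μ : ℂ} (h : (wp b m n).eval μ = 0) :
    ∃ k : ℕ, μ ^ (2 * m) = b ^ k := by
  rw [wp, eval_prod, Finset.prod_eq_zero_iff] at h
  obtain ⟨k, _, hk⟩ := h
  exact ⟨k, by simpa [sub_eq_zero] using hk⟩

/-- Nilpotency of a `q`-commuting operator. -/
theorem nilp [FiniteDimensional ℂ V] {K Ki E : Module.End ℂ V} {c : ℂ} (h0 : c ≠ 0)
    (hc : ∀ n : ℕ, 0 < n → c ^ n ≠ 1) (hKi : ∀ v, Ki (K v) = v)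
    (hKE : ∀ v, K (E v) = c • E (K v)) : ∃ n, E ^ n = 0 := by
  have key : ∀ μ, E.HasEigenvalue μ → μ = 0 := by
    intro μ hμ
    by_contra hne
    have step : ∀ n : ℕ, E.HasEigenvalue ((c⁻¹) ^ n * μ) := by
      intro n
      induction n with
      | zero => simpa using hμ
      | succ n ih =>
        obtain ⟨v, hv⟩ := ih.exists_hasEigenvector
        refine Module.End.hasEigenvalue_of_hasEigenvector (x := K v) ⟨?_, ?_⟩
        · rw [Module.End.mem_eigenspace_iff]
          have h1 := hKE v
          rw [hv.apply_eq_smul, map_smul] at h1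
          have h2 : E (K v) = c⁻¹ • (c • E (K v)) := by rw [smul_smul, inv_mul_cancel₀ h0, one_smul]
          rw [h2, ← h1, smul_smul, pow_succ]
          congr 1; ring
        · intro hz
          apply hv.2
          rw [← hKi v, hz, map_zero]
    have inj : Function.Injective (fun n : ℕ => (c⁻¹) ^ n * μ) := by
      intro i j hij
      have := mul_right_cancel₀ hne hij
      simp only [inv_pow, inv_inj] at this
      exact pow_inj_of h0 hc this
    exact Set.infinite_of_injective_forall_mem (s := {μ | E.HasEigenvalue μ}) inj step
      E.finite_hasEigenvalue
  have hall : ∀ v : V, ∃ n : ℕ, (E ^ n) v = 0 := by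
    have htop : E.maxGenEigenspace 0 = ⊤ := by
      rw [eq_top_iff, ← Module.End.iSup_maxGenEigenspace_eq_top E]
      apply iSup_le
      intro μ
      by_cases hμ : E.HasEigenvalue μ
      · rw [key μ hμ]
      · have : E.maxGenEigenspace μ = ⊥ := by
          rw [eq_bot_iff]
          intro v hv
          rw [Module.End.mem_maxGenEigenspace] at hv
          obtain ⟨k, hk⟩ := hv
          have hinj : Function.Injective (E - μ • (1 : Module.End ℂ V)) := by
            rw [← LinearMap.ker_eq_bot]
            by_contra hne
            apply hμ
            rw [Module.End.hasEigenvalue_iff, Module.End.eigenspace_def]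
            exact hne
          have : Function.Injective ((E - μ • (1 : Module.End ℂ V)) ^ k) := by
            rw [Module.End.coe_pow]; exact hinj.iterate k
          exact this (by rw [hk, map_zero])
        rw [this]; exact bot_le
    intro v
    have : v ∈ E.maxGenEigenspace 0 := htop ▸ Submodule.mem_top
    rw [Module.End.mem_maxGenEigenspace] at this
    simpa using this
  have : IsNilpotent E := ((LinearMap.charpoly_nilpotent_tfae E).out 0 2).mpr hall
  exact this

namespace Rep

variable {c a : ℂ} {m : ℕ} {K Ki E F : Module.End ℂ V}

theorem b0 (R : Rep c a m K Ki E F) : c ^ m ≠ 0 := pow_ne_zero _ R.hc0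

theorem hb (R : Rep c a m K Ki E F) : ∀ n : ℕ, 0 < n → (c ^ m) ^ n ≠ 1 := by
  intro n hn
  rw [← pow_mul]
  exact R.hc _ (Nat.mul_pos R.hm hn)

theorem KiF (R : Rep c a m K Ki E F) (v : V) : Ki (F v) = c • F (Ki v) := by
  have h := R.KF (Ki v)
  rw [R.KKi] at h
  have h2 := congrArg Ki h
  rw [R.KiK, map_smul] at h2
  rw [h2, smul_smul, mul_inv_cancel₀ R.hc0, one_smul]

theorem KnF (R : Rep c a m K Ki E F) (n : ℕ) (v : V) : (K ^ n) (F v) = (c ^ n)⁻¹ • F ((K ^ n) v) := by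
  induction n generalizing v with
  | zero => simp
  | succ n ih =>
    rw [pow_succ, Module.End.mul_apply, Module.End.mul_apply, R.KF, map_smul, ih, smul_smul,
      pow_succ, mul_inv, mul_comm]

theorem KinF (R : Rep c a m K Ki E F) (n : ℕ) (v : V) : (Ki ^ n) (F v) = (c ^ n) • F ((Ki ^ n) v) := by
  induction n generalizing v with
  | zero => simp
  | succ n ih =>
    rw [pow_succ, Module.End.mul_apply, Module.End.mul_apply, R.KiF, map_smul, ih, smul_smul,
      pow_succ, mul_comm]

theorem KFn (R : Rep c a m K Ki E F) (n : ℕ) (v : V) : K ((F ^ n) v) = (c ^ n)⁻¹ • (F ^ n) (K v) := by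
  induction n generalizing v with
  | zero => simp
  | succ n ih =>
    rw [pow_succ, Module.End.mul_apply, Module.End.mul_apply, ih, R.KF, map_smul, smul_smul,
      pow_succ, mul_inv]

theorem KnKi (R : Rep c a m K Ki E F) (n : ℕ) (v : V) : (K ^ n) ((Ki ^ n) v) = v := by
  induction n generalizing v with
  | zero => simp
  | succ n ih =>
    rw [pow_succ K, pow_succ' Ki, Module.End.mul_apply, Module.End.mul_apply, R.KKi, ih]

theorem KinK (R : Rep c a m K Ki E F) (n : ℕ) (v : V) : (Ki ^ n) ((K ^ n) v) = v := by
  induction n generalizing v with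
  | zero => simp
  | succ n ih =>
    rw [pow_succ Ki, pow_succ' K, Module.End.mul_apply, Module.End.mul_apply, R.KiK, ih]

theorem KnE (R : Rep c a m K Ki E F) (n : ℕ) (v : V) : (K ^ n) (E v) = (c ^ n) • E ((K ^ n) v) := by
  induction n generalizing v with
  | zero => simp
  | succ n ih =>
    rw [pow_succ, Module.End.mul_apply, Module.End.mul_apply, R.KE, map_smul, ih, smul_smul,
      pow_succ, mul_comm]

end Rep

/-- quantum integer -/
def qs (b : ℂ) (n : ℕ) : ℂ := ∑ i ∈ Finset.range (n + 1), (b⁻¹) ^ i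

theorem qs_ne {b : ℂ} (hb : ∀ n : ℕ, 0 < n → b ^ n ≠ 1) (n : ℕ) : qs b n ≠ 0 := by
  intro h
  have := geom_sum_mul (b⁻¹) (n + 1)
  rw [qs] at h
  rw [h, zero_mul] at this
  apply hb (n + 1) (by omega)
  have h2 := (sub_eq_zero.mp this.symm)
  rwa [inv_pow, inv_eq_one] at h2

theorem qs_succ (b : ℂ) (n : ℕ) : qs b (n + 1) = qs b n + (b⁻¹) ^ (n + 1) := by
  rw [qs, Finset.sum_range_succ, qs]

theorem qs_succ' (b : ℂ) (n : ℕ) : qs b (n + 1) = 1 + b⁻¹ * qs b n := by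
  rw [qs, Finset.sum_range_succ', qs, Finset.mul_sum, add_comm, pow_zero]
  congr 1
  apply Finset.sum_congr rfl
  intros; ring

namespace Rep

variable {c a : ℂ} {m : ℕ} {K Ki E F : Module.End ℂ V}

theorem EFn (R : Rep c a m K Ki E F) (n : ℕ) (v : V) : E ((F ^ (n + 1)) v) = (F ^ (n + 1)) (E v) +
    (a * qs (c ^ m) n) • (F ^ n) ((K ^ m) v - ((c ^ m) ^ n) • (Ki ^ m) v) := by
  induction n generalizing v with
  | zero => simp [R.EF, qs]
  | succ n ih =>
    have h1 : (F ^ (n + 1 + 1)) v = (F ^ (n + 1)) (F v) := by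
      rw [pow_succ, Module.End.mul_apply]
    rw [h1, ih, R.EF, R.KnF, R.KinF]
    have h2 : ∀ w, (F ^ (n + 1 + 1)) w = (F ^ n) (F (F w)) := by
      intro w; rw [pow_succ, pow_succ, Module.End.mul_apply, Module.End.mul_apply]
    have h3 : ∀ w, (F ^ (n + 1)) w = (F ^ n) (F w) := by
      intro w; rw [pow_succ, Module.End.mul_apply]
    simp only [h2, h3, map_add, map_sub, map_smul]
    have e1 := qs_succ' (c ^ m) n
    have e2 := qs_succ (c ^ m) n
    have e3 : qs (c ^ m) (n + 1) * (c ^ m) ^ (n + 1) = 1 + qs (c ^ m) n * (c ^ m) ^ (n + 1) := by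
      have := R.b0
      rw [e2, add_mul, ← mul_pow, inv_mul_cancel₀ this, one_pow, add_comm]
    have e4 : a * qs (c ^ m) (n + 1) * (c ^ m) ^ (n + 1)
      = a + a * (qs (c ^ m) n * (c ^ m) ^ (n + 1)) := by rw [mul_assoc, e3]; ring
    rw [smul_sub (a * qs (c ^ m) (n + 1)), smul_smul (a * qs (c ^ m) (n + 1)), e4, e1]
    module

theorem wp_mem (R : Rep c a m K Ki E F) {N : Submodule ℂ V} (hN : Stable K Ki E F N) (n : ℕ) :
    ∀ v, E v ∈ N → (F ^ n) v ∈ N → aeval K (wp (c ^ m) m n) v ∈ N := by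
  induction n with
  | zero => intro v _ h; simpa [wp] using h
  | succ n ih =>
    intro v hE hF
    have hEK : ∀ w, E w ∈ N → ∀ n, E ((K ^ n) w) ∈ N := by
      intro w hw n
      have h := R.KnE n w
      have h2 : E ((K ^ n) w) = (c ^ n)⁻¹ • (K ^ n) (E w) := by
        rw [h, smul_smul, inv_mul_cancel₀ (pow_ne_zero _ R.hc0), one_smul]
      rw [h2]
      exact N.smul_mem _ (pow_mem hN.K _ _ hw)
    have hFK : ∀ w j, (F ^ j) w ∈ N → ∀ n, (F ^ j) ((K ^ n) w) ∈ N := by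
      intro w j hw n
      have h : ∀ x, (F ^ j) (K x) = (c ^ j) • K ((F ^ j) x) := by
        intro x
        rw [R.KFn, smul_smul, mul_inv_cancel₀ (pow_ne_zero _ R.hc0), one_smul]
      induction n with
      | zero => simpa using hw
      | succ n ih =>
        rw [pow_succ', Module.End.mul_apply, h]
        exact N.smul_mem _ (hN.K _ ih)
    set u := (K ^ (2 * m)) v - ((c ^ m) ^ n) • v with hu
    have hEu : E u ∈ N := by
      rw [hu, map_sub, map_smul]
      exact N.sub_mem (hEK _ hE _) (N.smul_mem _ hE)
    have hFu : (F ^ n) u ∈ N := by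
      have h := R.EFn n ((K ^ m) v)
      rw [R.KinK, ← Module.End.mul_apply (K ^ m), ← pow_add, ← two_mul, ← hu] at h
      have h1 : E ((F ^ (n + 1)) ((K ^ m) v)) ∈ N := hN.E _ (hFK _ _ hF _)
      have h2 : (F ^ (n + 1)) (E ((K ^ m) v)) ∈ N := pow_mem hN.F _ _ (hEK _ hE _)
      have h3 := N.sub_mem h1 h2
      rw [h, add_sub_cancel_left] at h3
      have hne : a * qs (c ^ m) n ≠ 0 := mul_ne_zero R.ha (qs_ne R.hb n)
      exact (N.smul_mem_iff hne).mp h3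
    have := ih u hEu hFu
    have e : wp (c ^ m) m (n + 1) = wp (c ^ m) m n * (X ^ (2 * m) - C ((c ^ m) ^ n)) := by
      rw [wp, Finset.prod_range_succ, wp]
    have e2 : aeval K (X ^ (2 * m) - C ((c ^ m) ^ n)) v = u := by
      rw [map_sub, map_pow, aeval_X, aeval_C, LinearMap.sub_apply, Module.algebraMap_end_apply, hu]
    rw [e, map_mul, Module.End.mul_apply, e2]
    exact this

theorem lemB (R : Rep c a m K Ki E F) [FiniteDimensional ℂ V] {N : Submodule ℂ V} (hN : Stable K Ki E F N) {v : V}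
    (hE : E v ∈ N) {μ : ℂ} {r : ℕ} (hr : ((K - μ • (1 : Module.End ℂ V)) ^ r) v ∈ N) :
    K v - μ • v ∈ N ∧ (v ∉ N → ∃ k : ℕ, μ ^ (2 * m) = (c ^ m) ^ k) := by
  obtain ⟨n, hn⟩ : ∃ n, F ^ n = 0 := by
    refine nilp (K := K) (Ki := Ki) (c := c⁻¹) (inv_ne_zero R.hc0) ?_ R.KiK R.KF
    intro n hn h
    rw [inv_pow, inv_eq_one] at h
    exact R.hc n hn h
  have hP := R.wp_mem hN n v hE (by rw [hn]; simp)
  refine ⟨lemA1 hN.K (wp_sep R.b0 R.hb R.hm n) hP hr, fun hv => ?_⟩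
  by_contra hne
  exact hv (lemA0 hN.K (fun h => hne (wp_root h)) hP hr)

theorem stable_bot : Stable K Ki E F (⊥ : Submodule ℂ V) := by
  constructor <;> (intro v hv; rw [Submodule.mem_bot] at hv ⊢; simp [hv])

theorem le_of_gen [FiniteDimensional ℂ V] {W N : Submodule ℂ V} (hW : ∀ v ∈ W, K v ∈ W)
    (h : ∀ (μ : ℂ) (r : ℕ) (v : V), v ∈ W → ((K - μ • (1 : Module.End ℂ V)) ^ r) v = 0 → v ∈ N) : W ≤ N := by
  rw [Submodule.eq_iSup_inf_genEigenspace (f := K) (p := W) ⊤ hW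
    (Module.End.iSup_maxGenEigenspace_eq_top K)]
  apply iSup_le
  rintro μ v ⟨h1, h2⟩
  obtain ⟨k, hk⟩ := (Module.End.mem_maxGenEigenspace K μ v).mp h2
  exact h μ k v h1 hk

/-- Action on strings through highest weight vectors. -/
theorem EFv (R : Rep c a m K Ki E F) {v : V} {l : ℂ} (hE : E v = 0) (hK : K v = l • v) (hl : l ≠ 0) (n : ℕ) :
    E ((F ^ (n + 1)) v) =
      (a * qs (c ^ m) n * (l⁻¹ ^ m * (l ^ (2 * m) - (c ^ m) ^ n))) • (F ^ n) v := by
  have h1 : ∀ n, (K ^ n) v = l ^ n • v := by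
    intro n
    induction n with
    | zero => simp
    | succ n ih => rw [pow_succ, Module.End.mul_apply, hK, map_smul, ih, smul_smul, pow_succ, mul_comm]
  have h2 : (Ki ^ m) v = (l⁻¹) ^ m • v := by
    have := R.KinK m v
    rw [h1, map_smul] at this
    conv_rhs => rw [← this]
    rw [smul_smul, ← mul_pow, inv_mul_cancel₀ hl, one_pow, one_smul]
  rw [R.EFn, hE, map_zero, zero_add, h1, h2, map_sub, map_smul, map_smul, map_smul, two_mul, pow_add]
  have : l⁻¹ ^ m * (l ^ m * l ^ m - (c ^ m) ^ n) = l ^ m - (c ^ m) ^ n * l⁻¹ ^ m := by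
    have h3 : l⁻¹ ^ m * l ^ m = 1 := by rw [← mul_pow, inv_mul_cancel₀ hl, one_pow]
    linear_combination l ^ m * h3
  rw [this]
  module

theorem hw (R : Rep c a m K Ki E F) [FiniteDimensional ℂ V] {v : V} {l : ℂ} (hv : v ≠ 0) (hE : E v = 0)
    (hK : K v = l • v) : l ≠ 0 ∧ ∃ k : ℕ, l ^ (2 * m) = (c ^ m) ^ k := by
  constructor
  · rintro rfl
    apply hv
    rw [← R.KiK v, hK]; simp
  · exact (R.lemB (stable_bot) (v := v) (μ := l) (r := 1) (by simp [hE]) (by simp [hK])).2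
      (by simpa using hv)

theorem span_map_mem {T : Module.End ℂ V} {s : Set V}
    (h : ∀ x ∈ s, T x ∈ Submodule.span ℂ s) : ∀ x ∈ Submodule.span ℂ s, T x ∈ Submodule.span ℂ s := by
  have : Submodule.span ℂ s ≤ (Submodule.span ℂ s).comap T := Submodule.span_le.mpr h
  exact fun x hx => this hx

theorem KFv (R : Rep c a m K Ki E F) {v : V} {l : ℂ} (hK : K v = l • v) (n : ℕ) :
    K ((F ^ n) v) = ((c ^ n)⁻¹ * l) • (F ^ n) v := by
  rw [R.KFn, hK, map_smul, smul_smul]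

theorem Ki_of_K (R : Rep c a m K Ki E F) {v : V} {l : ℂ} (hl : l ≠ 0) (hK : K v = l • v) : Ki v = l⁻¹ • v := by
  have := R.KiK v
  rw [hK, map_smul] at this
  conv_rhs => rw [← this]
  rw [smul_smul, inv_mul_cancel₀ hl, one_smul]

theorem stable_of (R : Rep c a m K Ki E F) {s : Set V} (hs : ∀ x ∈ s, ∃ (v : V) (l : ℂ) (j : ℕ), l ≠ 0 ∧ E v = 0 ∧
    K v = l • v ∧ x = (F ^ j) v ∧ ∀ i, (F ^ i) v ∈ s) :
    Stable K Ki E F (Submodule.span ℂ s) := by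
  constructor
  · apply span_map_mem
    intro x hx
    obtain ⟨v, l, j, hl, hE, hK, rfl, hF⟩ := hs x hx
    rw [R.KFv hK]
    exact Submodule.smul_mem _ _ (Submodule.subset_span (hF _))
  · apply span_map_mem
    intro x hx
    obtain ⟨v, l, j, hl, hE, hK, rfl, hF⟩ := hs x hx
    rw [R.Ki_of_K (mul_ne_zero (inv_ne_zero (pow_ne_zero _ R.hc0)) hl) (R.KFv hK j)]
    exact Submodule.smul_mem _ _ (Submodule.subset_span (hF _))
  · apply span_map_mem
    intro x hx
    obtain ⟨v, l, j, hl, hE, hK, rfl, hF⟩ := hs x hx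
    cases j with
    | zero => simp [hE]
    | succ j =>
      rw [R.EFv hE hK hl]
      exact Submodule.smul_mem _ _ (Submodule.subset_span (hF _))
  · apply span_map_mem
    intro x hx
    obtain ⟨v, l, j, hl, hE, hK, rfl, hF⟩ := hs x hx
    rw [← Module.End.mul_apply, ← pow_succ']
    exact Submodule.subset_span (hF _)

end Rep

/-- All vectors in strings through highest weight vectors. -/
def strs (K E F : Module.End ℂ V) : Set V :=
  {x | ∃ (v : V) (l : ℂ) (j : ℕ), v ≠ 0 ∧ E v = 0 ∧ K v = l • v ∧ x = (F ^ j) v}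

namespace Rep

variable {c a : ℂ} {m : ℕ} {K Ki E F : Module.End ℂ V}

theorem strs_stable (R : Rep c a m K Ki E F) [FiniteDimensional ℂ V] : Stable K Ki E F (Submodule.span ℂ (strs K E F)) := by
  apply R.stable_of
  rintro x ⟨v, l, j, hv, hE, hK, rfl⟩
  exact ⟨v, l, j, (R.hw hv hE hK).1, hE, hK, rfl, fun i => ⟨v, l, i, hv, hE, hK, rfl⟩⟩

theorem str_stable (R : Rep c a m K Ki E F) {v : V} {l : ℂ} (hl : l ≠ 0) (hE : E v = 0) (hK : K v = l • v) :
    Stable K Ki E F (Submodule.span ℂ (Set.range fun i : ℕ => (F ^ i) v)) := by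
  apply R.stable_of
  rintro x ⟨j, rfl⟩
  exact ⟨v, l, j, hl, hE, hK, rfl, fun i => ⟨i, rfl⟩⟩

theorem ker_le (R : Rep c a m K Ki E F) [FiniteDimensional ℂ V] : LinearMap.ker E ≤ Submodule.span ℂ (strs K E F) := by
  apply le_of_gen (K := K)
  · intro v hv
    rw [LinearMap.mem_ker] at hv ⊢
    have := R.KE v
    rw [hv, map_zero] at this
    exact (smul_eq_zero.mp this.symm).resolve_left R.hc0
  · intro μ r v hv hr
    rw [LinearMap.mem_ker] at hv
    by_cases h0 : v = 0
    · rw [h0]; exact Submodule.zero_mem _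
    have h := (R.lemB stable_bot (v := v) (μ := μ) (r := r) (by simp [hv]) (by simp [hr])).1
    rw [Submodule.mem_bot, sub_eq_zero] at h
    exact Submodule.subset_span ⟨v, μ, 0, h0, hv, h, by simp⟩

theorem shift_pow (R : Rep c a m K Ki E F) (μ : ℂ) (r : ℕ) (w : V) :
    ((K - (c * μ) • (1 : Module.End ℂ V)) ^ r) (E w) =
      c ^ r • E (((K - μ • (1 : Module.End ℂ V)) ^ r) w) := by
  induction r generalizing w with
  | zero => simp
  | succ r ih =>
    have h : (K - (c * μ) • (1 : Module.End ℂ V)) (E w) =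
        c • E ((K - μ • (1 : Module.End ℂ V)) w) := by
      simp only [LinearMap.sub_apply, LinearMap.smul_apply, Module.End.one_apply, R.KE, map_sub,
        map_smul]
      module
    rw [pow_succ, pow_succ (K - μ • (1 : Module.End ℂ V)), Module.End.mul_apply,
      Module.End.mul_apply, h, map_smul, ih, smul_smul, pow_succ, mul_comm]

theorem comap_le (R : Rep c a m K Ki E F) [FiniteDimensional ℂ V] :
    (Submodule.span ℂ (strs K E F)).comap E ≤ Submodule.span ℂ (strs K E F) := by
  have hst := R.strs_stable
  set N := Submodule.span ℂ (strs K E F) with hN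
  apply le_of_gen (K := K)
  · intro v hv
    rw [Submodule.mem_comap] at hv ⊢
    have := hst.K _ hv
    rw [R.KE] at this
    exact (N.smul_mem_iff R.hc0).mp this
  intro μ r w hw hr
  rw [Submodule.mem_comap] at hw
  by_contra hwN
  obtain ⟨i, hi⟩ := (R.lemB hst hw (μ := μ) (r := r) (by rw [hr]; exact N.zero_mem)).2 hwN
  set T := N.map E with hT
  have hTK : ∀ v ∈ T, K v ∈ T := by
    rintro _ ⟨n, hn, rfl⟩
    rw [R.KE]
    exact T.smul_mem _ ⟨_, hst.K _ hn, rfl⟩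
  have hgen : ∀ y ∈ N, ∃ P : ℂ[X], P.eval (c * μ) ≠ 0 ∧ aeval K P y ∈ T := by
    intro y hy
    induction hy using Submodule.span_induction with
    | mem x hx =>
      obtain ⟨v, l, j, hv, hE, hK, rfl⟩ := hx
      obtain ⟨hl, -⟩ := R.hw hv hE hK
      by_cases hd : (c ^ j)⁻¹ * l = c * μ
      · refine ⟨1, by simp, ?_⟩
        rw [map_one, Module.End.one_apply]
        have h1 := R.EFv hE hK hl j
        have hne : a * qs (c ^ m) j * (l⁻¹ ^ m * (l ^ (2 * m) - (c ^ m) ^ j)) ≠ 0 := by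
          refine mul_ne_zero (mul_ne_zero R.ha (qs_ne R.hb j))
            (mul_ne_zero (pow_ne_zero _ (inv_ne_zero hl)) ?_)
          intro h
          rw [sub_eq_zero] at h
          have hl2 : l = c ^ (j + 1) * μ := by
            rw [pow_succ, mul_assoc, ← hd, mul_inv_cancel_left₀ (pow_ne_zero _ R.hc0)]
          rw [hl2, mul_pow, hi] at h
          have h3 : (c ^ (j + 1)) ^ (2 * m) * (c ^ m) ^ i = (c ^ m) ^ (2 * (j + 1) + i) := by
            simp only [← pow_mul, ← pow_add]
            congr 1; ring
          rw [h3] at h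
          have := pow_inj_of R.b0 R.hb h
          omega
        rw [← T.smul_mem_iff hne, ← h1]
        exact ⟨_, Submodule.subset_span ⟨v, l, j + 1, hv, hE, hK, rfl⟩, rfl⟩
      · refine ⟨X - C ((c ^ j)⁻¹ * l), ?_, ?_⟩
        · rw [eval_sub, eval_X, eval_C]
          exact sub_ne_zero.mpr (Ne.symm hd)
        · rw [map_sub, aeval_X, aeval_C, LinearMap.sub_apply, Module.algebraMap_end_apply,
            R.KFv hK, sub_self]
          exact T.zero_mem
    | zero => exact ⟨1, by simp, by simp⟩
    | add x y _ _ hx hy =>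
      obtain ⟨P, hP, hPx⟩ := hx
      obtain ⟨Q, hQ, hQy⟩ := hy
      refine ⟨P * Q, by rw [eval_mul]; exact mul_ne_zero hP hQ, ?_⟩
      rw [map_add]
      refine T.add_mem ?_ ?_
      · rw [mul_comm, map_mul, Module.End.mul_apply]
        exact aeval_mem hTK _ _ hPx
      · rw [map_mul, Module.End.mul_apply]
        exact aeval_mem hTK _ _ hQy
    | smul t x _ hx =>
      obtain ⟨P, hP, hPx⟩ := hx
      exact ⟨P, hP, by rw [map_smul]; exact T.smul_mem _ hPx⟩
  obtain ⟨P, hP, hPy⟩ := hgen _ hw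
  have hET : E w ∈ T := by
    refine lemA0 hTK hP (r := r) hPy ?_
    rw [R.shift_pow, hr, map_zero, smul_zero]
    exact T.zero_mem
  obtain ⟨n, hn, hnE⟩ := hET
  apply hwN
  have hk : w - n ∈ N := R.ker_le (by rw [LinearMap.mem_ker, map_sub, hnE, sub_self])
  simpa using N.add_mem hk hn

theorem E_nilp (R : Rep c a m K Ki E F) [FiniteDimensional ℂ V] : ∃ n, E ^ n = 0 :=
  nilp R.hc0 R.hc R.KiK R.KE

theorem span_top (R : Rep c a m K Ki E F) [FiniteDimensional ℂ V] : Submodule.span ℂ (strs K E F) = ⊤ := by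
  obtain ⟨n, hn⟩ := R.E_nilp
  have : ∀ (n : ℕ) (v : V), (E ^ n) v ∈ Submodule.span ℂ (strs K E F) →
      v ∈ Submodule.span ℂ (strs K E F) := by
    intro n
    induction n with
    | zero => intro v hv; simpa using hv
    | succ n ih =>
      intro v hv
      rw [pow_succ, Module.End.mul_apply] at hv
      exact R.comap_le (ih _ hv)
  rw [eq_top_iff]
  intro v _
  exact this n v (by rw [hn]; simp)

theorem simple_aux (R : Rep c a m K Ki E F) [FiniteDimensional ℂ V] {v : V} {l : ℂ} (hv : v ≠ 0) (hE : E v = 0)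
    (hK : K v = l • v) {S : Submodule ℂ V} (hS : ∀ x ∈ S, E x ∈ S) {x : V} (hx0 : x ≠ 0)
    (hxS : x ∈ S) (hx : x ∈ Submodule.span ℂ (Set.range fun i : ℕ => (F ^ i) v)) : v ∈ S := by
  obtain ⟨hl, k, hk⟩ := R.hw hv hE hK
  have hFk : (F ^ (k + 1)) v = 0 := by
    by_contra hne
    have h1 : E ((F ^ (k + 1)) v) = 0 := by
      rw [R.EFv hE hK hl, hk, sub_self, mul_zero, mul_zero, zero_smul]
    obtain ⟨-, k', hk'⟩ := R.hw hne h1 (R.KFv hK (k + 1))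
    rw [mul_pow, hk, inv_pow, inv_mul_eq_iff_eq_mul₀ (pow_ne_zero _ (pow_ne_zero _ R.hc0))] at hk'
    have h3 : (c ^ (k + 1)) ^ (2 * m) * (c ^ m) ^ k' = (c ^ m) ^ (2 * (k + 1) + k') := by
      simp only [← pow_mul, ← pow_add]
      congr 1; ring
    rw [h3] at hk'
    have := pow_inj_of R.b0 R.hb hk'
    omega
  have hEF : ∀ n, n ≤ k → ∃ t : ℂ, t ≠ 0 ∧ (E ^ n) ((F ^ n) v) = t • v := by
    intro n
    induction n with
    | zero => intro _; exact ⟨1, one_ne_zero, by simp⟩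
    | succ n ih =>
      intro hn
      obtain ⟨t, ht, h⟩ := ih (by omega)
      refine ⟨_, ?_, by rw [pow_succ E, Module.End.mul_apply, R.EFv hE hK hl, map_smul, h,
        smul_smul]⟩
      refine mul_ne_zero (mul_ne_zero (mul_ne_zero R.ha (qs_ne R.hb n))
            (mul_ne_zero (pow_ne_zero _ (inv_ne_zero hl)) ?_)) ht
      rw [hk, sub_ne_zero]
      intro h
      have := pow_inj_of R.b0 R.hb h
      omega
  have hEF0 : ∀ n i, i ≤ k → i < n → (E ^ n) ((F ^ i) v) = 0 := by
    intro n i hik hin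
    obtain ⟨t, _, h⟩ := hEF i hik
    obtain ⟨d, rfl⟩ : ∃ d, n = d + 1 + i := ⟨n - i - 1, by omega⟩
    rw [pow_add, Module.End.mul_apply, h, map_smul, pow_succ, Module.End.mul_apply, hE, map_zero,
      smul_zero]
  have hmain : ∀ n, n ≤ k + 1 → ∀ x : V, x ≠ 0 → x ∈ S →
      (∃ f : ℕ → ℂ, x = ∑ i ∈ Finset.range n, f i • (F ^ i) v) → v ∈ S := by
    intro n
    induction n with
    | zero => rintro _ x hx0 _ ⟨f, rfl⟩; simp at hx0
    | succ n ih =>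
      rintro hn x hx0 hxS ⟨f, hf⟩
      by_cases h0 : f n = 0
      · refine ih (by omega) x hx0 hxS ⟨f, ?_⟩
        rw [hf, Finset.sum_range_succ, h0, zero_smul, add_zero]
      · obtain ⟨t, ht, h⟩ := hEF n (by omega)
        have h1 : (E ^ n) x = (f n * t) • v := by
          rw [hf, Finset.sum_range_succ, map_add, map_sum, Finset.sum_eq_zero, zero_add, map_smul,
            h, smul_smul]
          intro i hi
          rw [Finset.mem_range] at hi
          rw [map_smul, hEF0 n i (by omega) hi, smul_zero]
        have h2 := pow_mem hS n x hxS
        rw [h1] at h2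
        exact (S.smul_mem_iff (mul_ne_zero h0 ht)).mp h2
  refine hmain (k + 1) le_rfl x hx0 hxS ?_
  clear hx0 hxS
  induction hx using Submodule.span_induction with
  | mem x hx =>
    obtain ⟨j, rfl⟩ := hx
    by_cases hj : j < k + 1
    · exact ⟨fun i => if i = j then 1 else 0, by simp [hj]⟩
    · refine ⟨0, ?_⟩
      obtain ⟨d, rfl⟩ : ∃ d, j = d + (k + 1) := ⟨j - (k + 1), by omega⟩
      simp only [pow_add F d, Module.End.mul_apply, hFk]
      simp
  | zero => exact ⟨0, by simp⟩
  | add x y _ _ hx hy =>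
    obtain ⟨f, hf⟩ := hx
    obtain ⟨g, hg⟩ := hy
    exact ⟨f + g, by simp [hf, hg, add_smul, Finset.sum_add_distrib]⟩
  | smul t x _ hx =>
    obtain ⟨f, hf⟩ := hx
    exact ⟨t • f, by simp [hf, Finset.smul_sum, smul_smul]⟩

end Rep

theorem gens_mem {q a : ℂ} {m : ℕ} {M : Type} [AddCommGroup M] [Module ℂ M]
    [Module (Uq q a m) M] [IsScalarTower ℂ (Uq q a m) M] {W : Submodule ℂ M}
    (hK : ∀ v ∈ W, genK q a m • v ∈ W) (hKi : ∀ v ∈ W, genKinv q a m • v ∈ W)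
    (hE : ∀ v ∈ W, genE q a m • v ∈ W) (hF : ∀ v ∈ W, genF q a m • v ∈ W) :
    ∀ (u : Uq q a m), ∀ v ∈ W, u • v ∈ W := by
  intro u
  obtain ⟨x, rfl⟩ := RingQuot.mkAlgHom_surjective ℂ (UqRel q a m) u
  induction x with
  | grade0 r =>
    intro v hv
    rw [AlgHom.commutes, algebraMap_smul]
    exact W.smul_mem _ hv
  | grade1 i =>
    fin_cases i
    · exact hK
    · exact hKi
    · exact hE
    · exact hF
  | mul x y hx hy =>
    intro v hv
    rw [map_mul, mul_smul]
    exact hx _ (hy _ hv)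
  | add x y hx hy =>
    intro v hv
    rw [map_add, add_smul]
    exact W.add_mem (hx _ hv) (hy _ hv)

theorem semisimple (q a : ℂ) (m : ℕ) (hm : 0 < m) (ha : a ≠ 0) (hq : NotRootOfUnity q)
    (M : Type) [AddCommGroup M] [Module ℂ M]
    [Module (Uq q a m) M] [IsScalarTower ℂ (Uq q a m) M] [FiniteDimensional ℂ M] :
    IsSemisimpleModule (Uq q a m) M := by
  let φ : Uq q a m →ₐ[ℂ] Module.End ℂ M := Algebra.lsmul ℂ ℂ M
  have hφ : ∀ u v, φ u v = u • v := fun u v => rfl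
  have rel : ∀ {x y}, UqRel q a m x y → ∀ v : M, φ (RingQuot.mkAlgHom ℂ (UqRel q a m) x) v =
      φ (RingQuot.mkAlgHom ℂ (UqRel q a m) y) v := by
    intro x y h v
    rw [RingQuot.mkAlgHom_rel ℂ h]
  have R : Rep (q ^ 2) a m (φ (genK q a m)) (φ (genKinv q a m)) (φ (genE q a m))
      (φ (genF q a m)) := by
    refine ⟨hm, ha, pow_ne_zero _ hq.1, ?_, ?_, ?_, ?_, ?_, ?_⟩
    · intro n hn
      rw [← pow_mul]
      exact hq.2 _ (by omega)
    · intro v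
      have := rel UqRel.KKinv v
      rw [map_mul, map_mul, map_one, map_one] at this
      exact this
    · intro v
      have := rel UqRel.KinvK v
      rw [map_mul, map_mul, map_one, map_one] at this
      exact this
    · intro v
      have := rel UqRel.KE v
      rw [map_mul, map_mul, map_smul, map_smul, map_mul, map_mul] at this
      exact this
    · intro v
      have := rel UqRel.KF v
      rw [map_mul, map_mul, map_smul, map_smul, map_mul, map_mul] at this
      exact this
    · intro v
      have := rel UqRel.EF v
      simp only [map_mul, map_smul, map_add, map_sub, map_pow] at this
      exact this
  have stab : ∀ N : Submodule ℂ M, Stable (φ (genK q a m)) (φ (genKinv q a m)) (φ (genE q a m))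
      (φ (genF q a m)) N → ∀ (u : Uq q a m), ∀ v ∈ N, u • v ∈ N :=
    fun N h => gens_mem h.K h.Ki h.E h.F
  apply IsSemisimpleModule.of_sSup_simples_eq_top
  rw [eq_top_iff]
  intro x _
  have hx : x ∈ Submodule.span ℂ (strs (φ (genK q a m)) (φ (genE q a m)) (φ (genF q a m))) := by
    rw [R.span_top]; trivial
  induction hx using Submodule.span_induction with
  | zero => exact Submodule.zero_mem _
  | add x y _ _ hx hy => exact Submodule.add_mem _ (hx trivial) (hy trivial)
  | smul t x _ hx =>
    rw [← algebraMap_smul (Uq q a m) t x]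
    exact Submodule.smul_mem _ _ (hx trivial)
  | mem x hx =>
    obtain ⟨v, l, j, hv, hE, hK, rfl⟩ := hx
    have hstr := R.str_stable (R.hw hv hE hK).1 hE hK
    have hle : ∀ y ∈ Submodule.span (Uq q a m) {v},
        y ∈ Submodule.span ℂ (Set.range fun i : ℕ => ((φ (genF q a m)) ^ i) v) := by
      intro y hy
      obtain ⟨u, rfl⟩ := Submodule.mem_span_singleton.mp hy
      exact stab _ hstr u v (Submodule.subset_span ⟨0, by simp⟩)
    have hsimple : IsSimpleModule (Uq q a m) (Submodule.span (Uq q a m) {v}) := by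
      rw [isSimpleModule_iff_isAtom]
      constructor
      · rw [Ne, Submodule.span_singleton_eq_bot]; exact hv
      · intro b hb
        by_contra hne
        obtain ⟨y, hyb, hy0⟩ := Submodule.exists_mem_ne_zero_of_ne_bot hne
        have hvb : v ∈ b.restrictScalars ℂ :=
          R.simple_aux hv hE hK (S := b.restrictScalars ℂ)
            (fun x hx => b.smul_mem (genE q a m) hx) hy0 hyb (hle y (hb.le hyb))
        exact hb.not_ge ((Submodule.span_singleton_le_iff_mem _ _).mpr hvb)
    apply (le_sSup (a := Submodule.span (Uq q a m) {v}) hsimple :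
      Submodule.span (Uq q a m) {v} ≤ _)
    rw [← map_pow]
    exact Submodule.smul_mem _ _ (Submodule.mem_span_singleton_self v)

end UqAux

/-- for `κ ≠ 0` (relation `EF - FE = (Kᵐ - K⁻ᵐ)/(qᵐ - q⁻ᵐ)`), every
finite-dimensional `U_q(sl*₂,κ)`-module is semisimple. -/
theorem stmt18 (q : ℂ) (m : ℕ) (hm : 0 < m) (hq : NotRootOfUnity q)
    (M : Type) [AddCommGroup M] [Module ℂ M]
    [Module (Uq q (q ^ (m : ℤ) - q ^ (-(m : ℤ)))⁻¹ m) M]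
    [IsScalarTower ℂ (Uq q (q ^ (m : ℤ) - q ^ (-(m : ℤ)))⁻¹ m) M]
    [FiniteDimensional ℂ M] :
    IsSemisimpleModule (Uq q (q ^ (m : ℤ) - q ^ (-(m : ℤ)))⁻¹ m) M := by
  refine UqAux.semisimple q _ m hm ?_ hq M
  apply inv_ne_zero
  intro h
  have h0 : q ^ m ≠ 0 := pow_ne_zero _ hq.1
  rw [sub_eq_zero, zpow_neg, zpow_natCast] at h
  apply hq.2 (m + m) (by omega)
  rw [pow_add]
  nth_rewrite 1 [h]
  exact inv_mul_cancel₀ h0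

end
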